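/- For every integer n ≥ 1, one has |B_n/B_{n−1} − e^{W(n)}| ≤ (8/7)·(1/W(n)). -/

import Mathlib

/-- Principal branch of the Lambert W function on `[0, ∞)`: for `x ≥ 0`,
`lambertW x` is the unique `y ≥ 0` with `y * exp y = x`. -/
noncomputable def lambertW (x : ℝ) : ℝ := Function.invFun (fun y : ℝ => y * Real.exp y) x

/-- Bell numbers: `Bell 0 = 1` and `Bell (n+1) = ∑_{k=0}^{n} C(n,k) * Bell k`. -/
def Bell : ℕ → ℕ
  | 0 => 1
  | n + 1 => ∑ k ∈ (Finset.range (n + 1)).attach, (n.choose k.1) * Bell k.1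
decreasing_by exact Finset.mem_range.mp k.2


lemma Bell_succ' (n : ℕ) : Bell (n+1) = ∑ k ∈ Finset.range (n+1), n.choose k * Bell k := by
  rw [Bell, Finset.sum_attach (Finset.range (n+1)) (fun k => n.choose k * Bell k)]

lemma Bell_zero' : Bell 0 = 1 := by rw [Bell]

lemma Bell_pos' (n : ℕ) : 0 < Bell n := by
  induction n using Nat.strong_induction_on with
  | _ n ih =>
    cases n with
    | zero => simp [Bell_zero']
    | succ n =>
      rw [Bell_succ']
      apply Finset.sum_pos
      · intro k hk
        have := Finset.mem_range.mp hk
        exact Nat.mul_pos (Nat.choose_pos (by omega)) (ih k (by omega))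
      · simp

lemma dobinski (n : ℕ) :
    HasSum (fun k : ℕ => (k:ℝ)^n / (k.factorial : ℝ)) (Real.exp 1 * Bell n) := by
  induction n using Nat.strong_induction_on with
  | _ n ih =>
    cases n with
    | zero =>
      have := NormedSpace.expSeries_div_hasSum_exp (1:ℝ)
      simpa [Bell_zero', Real.exp_eq_exp_ℝ] using this
    | succ n =>
      rw [← hasSum_nat_add_iff' 1]
      have h1 : HasSum (fun k : ℕ => ∑ j ∈ Finset.range (n+1),
          (n.choose j : ℝ) * ((k:ℝ)^j / (k.factorial : ℝ)))
          (∑ j ∈ Finset.range (n+1), (n.choose j : ℝ) * (Real.exp 1 * Bell j)) := by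
        apply hasSum_sum
        intro j hj
        exact (ih j (Finset.mem_range.mp hj)).mul_left _
      have hfun : (fun k : ℕ => ((k+1 : ℕ):ℝ)^(n+1) / ((k+1).factorial : ℝ)) =
          fun k : ℕ => ∑ j ∈ Finset.range (n+1),
          (n.choose j : ℝ) * ((k:ℝ)^j / (k.factorial : ℝ)) := by
        funext k
        have hk : ((k:ℝ)+1) ≠ 0 := by positivity
        have hf : (k.factorial : ℝ) ≠ 0 := by positivity
        have : ((k:ℝ)+1)^n = ∑ j ∈ Finset.range (n+1), (k:ℝ)^j * (n.choose j : ℝ) := by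
          rw [add_pow]; simp
        rw [Nat.factorial_succ]
        push_cast
        rw [pow_succ, this, mul_comm _ ((k:ℝ)+1), mul_div_mul_left _ _ hk, Finset.sum_div]
        apply Finset.sum_congr rfl
        intro j hj
        ring
      have hval : Real.exp 1 * (Bell (n+1) : ℝ) -
          ∑ i ∈ Finset.range 1, ((i:ℕ):ℝ)^(n+1) / (i.factorial : ℝ) =
          ∑ j ∈ Finset.range (n+1), (n.choose j : ℝ) * (Real.exp 1 * Bell j) := by
        rw [Bell_succ']
        push_cast
        simp [Finset.mul_sum]
        apply Finset.sum_congr rfl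
        intro j hj
        ring
      rw [hfun, hval]
      exact h1

lemma logconvex (n : ℕ) : (Bell (n+1) : ℝ)^2 ≤ Bell n * Bell (n+2) := by
  set μ : ℝ := Bell (n+1) / Bell n with hμ
  have hp : (0:ℝ) < Bell n := by exact_mod_cast Bell_pos' n
  have h := ((dobinski (n+2)).sub ((dobinski (n+1)).mul_left (2*μ))).add
    ((dobinski n).mul_left (μ^2))
  have h0 := h.nonneg (by
    intro k
    have : (k:ℝ)^(n+2) / (k.factorial : ℝ) - 2*μ*((k:ℝ)^(n+1) / (k.factorial : ℝ))
      + μ^2 * ((k:ℝ)^n / (k.factorial : ℝ)) = (k:ℝ)^n / (k.factorial : ℝ) * (k-μ)^2 := by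
      ring
    simp only [this]
    positivity)
  have h2 : 0 ≤ Real.exp 1 * (Bell (n+2) - 2*μ*Bell (n+1) + μ^2 * Bell n) := by
    linarith
  have h3 := nonneg_of_mul_nonneg_right h2 (Real.exp_pos 1)
  have h4 : (Bell (n+1) : ℝ) = μ * Bell n := by rw [hμ]; field_simp
  rw [h4] at h3 ⊢
  nlinarith

lemma pade (r : ℝ) (hr : 0 < r) : Real.log r ≤ (r-1) - 3*(r-1)^2/(2+4*r) := by
  let h : ℝ → ℝ := fun r => (r-1) - 3*(r-1)^2/(2+4*r) - Real.log r
  have hd : ∀ x, 0 < x → HasDerivAt h ((x-1)^3/(x*(1+2*x)^2)) x := by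
    intro x hx
    have h1 : HasDerivAt (fun r:ℝ => r-1) 1 x := (hasDerivAt_id x).sub_const 1
    have h2 : HasDerivAt (fun r:ℝ => 2+4*r) 4 x := by
      simpa using ((hasDerivAt_id x).const_mul 4).const_add 2
    have h3 := (h1.sub (((h1.pow 2).const_mul 3).div h2 (by positivity))).sub
      (Real.hasDerivAt_log hx.ne')
    refine HasDerivAt.congr_deriv (f := h) h3 ?_
    have : 2+4*x ≠ 0 := by positivity
    have : 1+2*x ≠ 0 := by positivity
    simp only [Pi.pow_apply]
    field_simp
    ring
  have h1 : h 1 = 0 := by simp [h]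
  suffices 0 ≤ h r by simp only [h] at this; linarith
  rcases le_total 1 r with h' | h'
  · have : MonotoneOn h (Set.Ici 1) := by
      apply monotoneOn_of_deriv_nonneg (convex_Ici 1)
      · intro x hx
        exact (hd x (by have : (1:ℝ) ≤ x := hx
                        linarith)).continuousAt.continuousWithinAt
      · intro x hx
        rw [interior_Ici] at hx
        exact (hd x (by have : (1:ℝ) < x := hx
                        linarith)).differentiableAt.differentiableWithinAt
      · intro x hx
        rw [interior_Ici] at hx
        have hx : (1:ℝ) < x := hx
        rw [(hd x (by linarith)).deriv]
        have : 0 < x - 1 := by linarith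
        positivity
    rw [← h1]
    exact this (by simp) h' h'
  · have : AntitoneOn h (Set.Icc r 1) := by
      apply antitoneOn_of_deriv_nonpos (convex_Icc r 1)
      · intro x hx
        exact (hd x (by linarith [hx.1])).continuousAt.continuousWithinAt
      · intro x hx
        rw [interior_Icc] at hx
        exact (hd x (by linarith [hx.1])).differentiableAt.differentiableWithinAt
      · intro x hx
        rw [interior_Icc] at hx
        have hx0 : 0 < x := by linarith [hx.1]
        rw [(hd x hx0).deriv]
        have : 0 ≤ 1 - x := by linarith [hx.2]
        have h3 : (x-1)^3 = -((1-x)^3) := by ring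
        rw [h3, neg_div]
        apply neg_nonpos.mpr
        positivity
    rw [← h1]
    exact this (by simp [h']) (by simp [h']) h'

noncomputable def bb (n : ℕ) : ℝ := (Bell n : ℝ) / (n.factorial : ℝ)

lemma bb_pos (n : ℕ) : 0 < bb n := by
  unfold bb
  have : (0:ℝ) < Bell n := by exact_mod_cast Bell_pos' n
  positivity

lemma bb_rec (n : ℕ) : ((n:ℝ)+1) * bb (n+1) =
    ∑ i ∈ Finset.range (n+1), bb (n-i) / (i.factorial : ℝ) := by
  rw [← Finset.sum_range_reflect]
  unfold bb
  rw [Bell_succ', Nat.factorial_succ]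
  push_cast
  have hf : (n.factorial : ℝ) ≠ 0 := by positivity
  have : ((n:ℝ)+1) ≠ 0 := by positivity
  rw [← mul_div_assoc, mul_div_mul_left _ _ this, Finset.sum_div]
  apply Finset.sum_congr rfl
  intro k hk
  have hk : k ≤ n := by have := Finset.mem_range.mp hk; omega
  have e2 : n - (n-k) = k := by omega
  rw [e2, Nat.cast_choose ℝ hk]
  field_simp

lemma cheb (n : ℕ) (x f g : ℕ → ℝ) (hx : ∀ i < n, 0 ≤ x i)
    (hf : ∀ i j, i ≤ j → j < n → f j ≤ f i) (hg : ∀ i j, i ≤ j → j < n → g j ≤ g i) :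
    (∑ i ∈ Finset.range n, x i * f i) * (∑ i ∈ Finset.range n, x i * g i) ≤
    (∑ i ∈ Finset.range n, x i) * (∑ i ∈ Finset.range n, x i * f i * g i) := by
  have h : 0 ≤ ∑ i ∈ Finset.range n, ∑ j ∈ Finset.range n,
      x i * x j * ((f i - f j) * (g i - g j)) := by
    apply Finset.sum_nonneg
    intro i hi
    apply Finset.sum_nonneg
    intro j hj
    have hi := Finset.mem_range.mp hi
    have hj := Finset.mem_range.mp hj
    apply mul_nonneg (mul_nonneg (hx i hi) (hx j hj))
    rcases le_total i j with h | h
    · exact mul_nonneg (by linarith [hf i j h hj]) (by linarith [hg i j h hj])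
    · exact mul_nonneg_of_nonpos_of_nonpos (by linarith [hf j i h hi]) (by linarith [hg j i h hi])
  have e : ∑ i ∈ Finset.range n, ∑ j ∈ Finset.range n,
      x i * x j * ((f i - f j) * (g i - g j)) =
      2 * ((∑ i ∈ Finset.range n, x i) * (∑ i ∈ Finset.range n, x i * f i * g i)) -
      2 * ((∑ i ∈ Finset.range n, x i * f i) * (∑ i ∈ Finset.range n, x i * g i)) := by
    have e1 : ∀ i j, x i * x j * ((f i - f j) * (g i - g j)) =
      (x i * f i * g i) * x j + x i * (x j * f j * g j) - (x i * f i) * (x j * g j)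
       - (x i * g i) * (x j * f j) := by intros; ring
    simp only [e1, Finset.sum_sub_distrib, Finset.sum_add_distrib, ← Finset.sum_mul_sum]
    ring
  linarith

/-- `Bell (n+1) ≤ (n+1) Bell n` -/
lemma bb_anti (n : ℕ) : bb (n+1) ≤ bb n := by
  induction n using Nat.strong_induction_on with
  | _ n ih =>
    cases n with
    | zero => simp [bb, Bell_succ', Bell_zero']
    | succ n =>
      have h1 := bb_rec (n+1)
      have h2 := bb_rec n
      rw [Finset.sum_range_succ] at h1
      have h3 : ∑ i ∈ Finset.range (n+1), bb (n+1-i) / (i.factorial : ℝ) ≤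
          ∑ i ∈ Finset.range (n+1), bb (n-i) / (i.factorial : ℝ) := by
        apply Finset.sum_le_sum
        intro i hi
        have hi := Finset.mem_range.mp hi
        have e : n+1-i = (n-i)+1 := by omega
        rw [e]
        have := ih (n-i) (by omega)
        gcongr
      rw [← h2] at h3
      have h4 : bb (n+1-(n+1)) / ((n+1).factorial : ℝ) ≤ bb (n+1) := by
        have : (1:ℝ) ≤ Bell (n+1) := by exact_mod_cast Bell_pos' (n+1)
        simp only [Nat.sub_self]
        unfold bb
        simp only [Bell_zero', Nat.factorial_zero]
        push_cast
        gcongr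
        simpa using this
      simp only [Nat.sub_self] at h1 h4
      push_cast at h1
      have hp : (0:ℝ) < (n:ℝ)+1+1 := by positivity
      nlinarith

lemma bb_rec' (n : ℕ) : ((n:ℝ)+2) * bb (n+2) - bb (n+1) =
    ∑ i ∈ Finset.range (n+1), bb (n-i) / ((i+1).factorial : ℝ) := by
  have h := bb_rec (n+1)
  rw [Finset.sum_range_succ'] at h
  simp only [Nat.factorial_zero, Nat.add_sub_add_right] at h
  push_cast at h
  simp only [Nat.sub_zero, div_one] at h
  have e : n + 1 + 1 = n + 2 := rfl
  rw [e] at h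
  linarith

lemma logconcave (n : ℕ) : bb n * bb (n+2) ≤ bb (n+1) ^ 2 := by
  induction n using Nat.strong_induction_on with
  | _ n ih =>
    cases n with
    | zero =>
      simp [bb, Bell_succ', Bell_zero', Finset.sum_range_succ, Nat.factorial]
    | succ k =>
      have ih1 : ∀ j, j < k + 1 → bb j / bb (j+1) ≤ bb (j+1) / bb (j+2) := by
        intro j hj
        rw [div_le_div_iff₀ (bb_pos _) (bb_pos _)]
        nlinarith [ih j hj]
      have ih2 : ∀ i j, i ≤ j → j < k + 2 → bb i / bb (i+1) ≤ bb j / bb (j+1) := by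
        intro i j hij
        induction j, hij using Nat.le_induction with
        | base => intro _; exact le_rfl
        | succ j hj ihj => intro h; exact (ihj (by omega)).trans (ih1 j (by omega))
      have h := cheb (k+2) (fun i => bb (k+1-i) / (i.factorial : ℝ))
        (fun i => if i < k+1 then bb (k-i) / bb (k+1-i) else 0) (fun i => 1/((i:ℝ)+1))
        (by intro i _; have := bb_pos (k+1-i); positivity)
        (by
          intro i j hij hj
          split_ifs with h1 h2
          · have := ih2 (k-j) (k-i) (by omega) (by omega)
            have e1 : k - j + 1 = k + 1 - j := by omega
            have e2 : k - i + 1 = k + 1 - i := by omega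
            rwa [e1, e2] at this
          · omega
          · have := bb_pos (k-i)
            have := bb_pos (k+1-i)
            positivity
          · exact le_rfl)
        (by
          intro i j hij hj
          have : (i:ℝ) ≤ j := by exact_mod_cast hij
          gcongr)
      have s1 : ∑ i ∈ Finset.range (k+2), bb (k+1-i) / (i.factorial : ℝ) =
          ((k:ℝ)+2) * bb (k+2) := by
        have := bb_rec (k+1)
        push_cast at this
        rw [← this]
        have e : k + 1 + 1 = k + 2 := rfl
        rw [e]; ring
      have s2 : ∑ i ∈ Finset.range (k+2), bb (k+1-i) / (i.factorial : ℝ) *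
          (if i < k+1 then bb (k-i) / bb (k+1-i) else 0) = ((k:ℝ)+1) * bb (k+1) := by
        rw [Finset.sum_range_succ, bb_rec k]
        simp only [lt_irrefl, if_false, mul_zero, add_zero]
        apply Finset.sum_congr rfl
        intro i hi
        rw [if_pos (Finset.mem_range.mp hi)]
        have := (bb_pos (k+1-i)).ne'
        field_simp
      have s3 : ∑ i ∈ Finset.range (k+2), bb (k+1-i) / (i.factorial : ℝ) *
          (1/((i:ℝ)+1)) = ((k:ℝ)+3) * bb (k+3) - bb (k+2) := by
        have := bb_rec' (k+1)
        push_cast at this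
        have e : (k:ℝ)+1+2 = k+3 := by ring
        have e' : k+1+2 = k + 3 := rfl
        have e'' : k+1+1 = k + 2 := rfl
        rw [e, e', e''] at this
        rw [this]
        apply Finset.sum_congr rfl
        intro i hi
        rw [Nat.factorial_succ]
        push_cast
        field_simp
      have s4 : ∑ i ∈ Finset.range (k+2), bb (k+1-i) / (i.factorial : ℝ) *
          (if i < k+1 then bb (k-i) / bb (k+1-i) else 0) * (1/((i:ℝ)+1)) =
           ((k:ℝ)+2) * bb (k+2) - bb (k+1) := by
        rw [Finset.sum_range_succ, bb_rec' k]
        simp only [lt_irrefl, if_false, mul_zero, add_zero, zero_mul]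
        apply Finset.sum_congr rfl
        intro i hi
        rw [if_pos (Finset.mem_range.mp hi)]
        have := (bb_pos (k+1-i)).ne'
        rw [Nat.factorial_succ]
        push_cast
        field_simp
      rw [s1, s2, s3, s4] at h
      have ha := bb_anti (k+1)
      have e'' : k+1+1 = k + 2 := rfl
      rw [e''] at ha
      change bb (k+1) * bb (k+3) ≤ bb (k+2)^2
      have hp := bb_pos (k+2)
      have hq := bb_pos (k+1)
      have hk : (0:ℝ) < ((k:ℝ)+2)^2 - 1 := by nlinarith [(Nat.cast_nonneg k : (0:ℝ) ≤ k)]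
      have : 0 ≤ (((k:ℝ)+2)^2 - 1) * (bb (k+2)^2 - bb (k+1) * bb (k+3)) := by
        nlinarith [mul_nonneg hp.le (sub_nonneg.mpr ha)]
      have := nonneg_of_mul_nonneg_right this hk
      linarith

lemma key_pointwise (M : ℕ) (μ l : ℝ) (hμ : 0 < μ) (k : ℕ) :
    ((k+1 : ℕ):ℝ)^(M+3) / ((k+1).factorial : ℝ) *
        (-1 - 2*l*(((k+1 : ℕ):ℝ)-1-μ) - 4/3*l^2*(((k+1 : ℕ):ℝ)-1-μ)^2) +
      (k:ℝ)^(M+3) / (k.factorial : ℝ) * (1 + 2*l*(k-μ) - 2/3*l^2*(k-μ)^2) ≤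
    (k:ℝ)^(M+3) / (k.factorial : ℝ) * (Real.log (μ+1) - μ/(μ+1)) +
      (k:ℝ)^(M+4) / (k.factorial : ℝ) * (1/(μ+1)) -
      (k:ℝ)^(M+2) / (k.factorial : ℝ) * ((M:ℝ)+3) +
      (k:ℝ)^(M+1) / (k.factorial : ℝ) * (((M:ℝ)+3)/2) := by
  rcases Nat.eq_zero_or_pos k with h0 | hk
  · subst h0
    simp
    nlinarith [sq_nonneg (l*μ - 3/4)]
  · have hk' : (0:ℝ) < k := by exact_mod_cast hk
    have hf : (0:ℝ) < k.factorial := by positivity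
    obtain ⟨x, hx⟩ : ∃ x : ℝ, x = (k:ℝ) := ⟨_, rfl⟩
    rw [← hx] at hk' ⊢
    set w : ℝ := x^(M+3) / (k.factorial : ℝ) with hw
    have hwp : 0 < w := by positivity
    set r : ℝ := (1+1/x)^(M+3) / (x+1) with hr
    have hrp : 0 < r := by positivity
    have e1 : ((k+1 : ℕ):ℝ)^(M+3) / ((k+1).factorial : ℝ) = w * r := by
      rw [Nat.factorial_succ]
      push_cast
      have : 1 + 1/x = (x+1)/x := by field_simp
      rw [hw, hr, this, div_pow]
      field_simp
      rw [hx]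
      ring
    have e2 : x^(M+4) / (k.factorial : ℝ) = w * x := by rw [hw]; ring
    have e3 : x^(M+2) / (k.factorial : ℝ) = w * (1/x) := by rw [hw]; field_simp; ring
    have e4 : x^(M+1) / (k.factorial : ℝ) = w * (1/x^2) := by rw [hw]; field_simp; ring
    rw [e1, e2, e3, e4]
    push_cast
    rw [← hx]
    have hlog : Real.log r = ((M:ℝ)+3) * Real.log (1+1/x) - Real.log (x+1) := by
      rw [hr, Real.log_div (by positivity) (by positivity), Real.log_pow]
      push_cast; ring
    have l1 : Real.log (x+1) ≤ Real.log (μ+1) + (x-μ)/(μ+1) := by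
      have h := Real.log_le_sub_one_of_pos (x := (x+1)/(μ+1)) (by positivity)
      rw [Real.log_div (by positivity) (by positivity)] at h
      have : (x+1)/(μ+1) - 1 = (x-μ)/(μ+1) := by field_simp; ring
      linarith
    have l2 : 1/x - 1/2*(1/x^2) ≤ Real.log (1+1/x) := by
      have h := Real.le_log_one_add_of_nonneg (x := 1/x) (by positivity)
      refine le_trans ?_ h
      rw [le_div_iff₀ (by positivity)]
      have : (1/x - 1/2*(1/x^2)) * (1/x+2) = 2*(1/x) - 1/2*(1/x)^3 := by field_simp; ring
      rw [this]
      have : 0 < (1/x)^3 := by positivity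
      linarith
    have l3 := pade r hrp
    have l4 : -(2*l*(r-1)*(x-μ)) - l^2*(2+4*(r-1)/3)*(x-μ)^2 ≤ 3*(r-1)^2/(2+4*r) := by
      rw [le_div_iff₀ (by positivity)]
      nlinarith [sq_nonneg ((r-1)*3 + l*(x-μ)*(2+4*r))]
    have l5 : ((M:ℝ)+3) * (1/x - 1/2*(1/x^2)) ≤ ((M:ℝ)+3) * Real.log (1+1/x) :=
      mul_le_mul_of_nonneg_left l2 (by positivity)
    have main : r * (-1 - 2*l*(x-μ) - 4/3*l^2*(x-μ)^2) + (1 + 2*l*(x-μ) - 2/3*l^2*(x-μ)^2) ≤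
        (Real.log (μ+1) + (x-μ)/(μ+1)) - ((M:ℝ)+3) * (1/x - 1/2*(1/x^2)) := by
      nlinarith
    have := mul_le_mul_of_nonneg_left main hwp.le
    have e5 : x + 1 - 1 - μ = x - μ := by ring
    rw [e5]
    have e6 : (x-μ)/(μ+1) = x * (1/(μ+1)) - μ/(μ+1) := by ring
    rw [e6] at this
    linarith

lemma key_sum (M : ℕ) (μ l : ℝ) (hμ : μ = (Bell (M+4) : ℝ) / Bell (M+3)) :
    (Bell (M+3) : ℝ) * (2*l - 4/3 * l^2) - 2*l^2 * (Bell (M+5) - μ * Bell (M+4)) ≤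
    Bell (M+3) * Real.log (μ+1) - ((M:ℝ)+3) * Bell (M+2) + ((M:ℝ)+3)/2 * Bell (M+1) := by
  have hp : (0:ℝ) < Bell (M+3) := by exact_mod_cast Bell_pos' _
  have hp4 : (0:ℝ) < Bell (M+4) := by exact_mod_cast Bell_pos' _
  have hμp : 0 < μ := by rw [hμ]; positivity
  have d1 := dobinski (M+1)
  have d2 := dobinski (M+2)
  have d3 := dobinski (M+3)
  have d4 := dobinski (M+4)
  have d5 := dobinski (M+5)
  have R := (((d3.mul_right (Real.log (μ+1) - μ/(μ+1))).add (d4.mul_right (1/(μ+1)))).sub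
    (d2.mul_right ((M:ℝ)+3))).add (d1.mul_right (((M:ℝ)+3)/2))
  have P1 : HasSum (fun k : ℕ => (k:ℝ)^(M+3) / (k.factorial : ℝ) *
        (-1 - 2*l*(k-1-μ) - 4/3*l^2*(k-1-μ)^2))
      (Real.exp 1 * Bell (M+3) * (-1 + 2*l*(1+μ) - 4/3*l^2*(1+μ)^2) +
       Real.exp 1 * Bell (M+4) * (-2*l + 8/3*l^2*(1+μ)) +
       Real.exp 1 * Bell (M+5) * (-4/3*l^2)) := by
    have := ((d3.mul_right (-1 + 2*l*(1+μ) - 4/3*l^2*(1+μ)^2)).add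
      (d4.mul_right (-2*l + 8/3*l^2*(1+μ)))).add (d5.mul_right (-4/3*l^2))
    refine this.congr_fun ?_
    intro k
    ring
  have P1' := (hasSum_nat_add_iff' 1).mpr P1
  have P2 : HasSum (fun k : ℕ => (k:ℝ)^(M+3) / (k.factorial : ℝ) *
        (1 + 2*l*(k-μ) - 2/3*l^2*(k-μ)^2))
      (Real.exp 1 * Bell (M+3) * (1 - 2*l*μ - 2/3*l^2*μ^2) +
       Real.exp 1 * Bell (M+4) * (2*l + 4/3*l^2*μ) +
       Real.exp 1 * Bell (M+5) * (-2/3*l^2)) := by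
    have := ((d3.mul_right (1 - 2*l*μ - 2/3*l^2*μ^2)).add
      (d4.mul_right (2*l + 4/3*l^2*μ))).add (d5.mul_right (-2/3*l^2))
    refine this.congr_fun ?_
    intro k
    ring
  have h := hasSum_le (fun k => key_pointwise M μ l hμp k) (P1'.add P2) R
  simp only [Finset.range_one, Finset.sum_singleton] at h
  simp at h
  have h4 : (Bell (M+4) : ℝ) = μ * Bell (M+3) := by rw [hμ]; field_simp
  rw [h4] at h ⊢
  refine le_of_mul_le_mul_left ?_ (Real.exp_pos 1)
  have e : (μ+1)⁻¹ * (μ+1) = 1 := by field_simp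
  have e7 : Real.exp 1 * ↑(Bell (M + 3)) * (Real.log (μ + 1) - μ / (μ + 1)) +
     Real.exp 1 * (μ * ↑(Bell (M + 3))) * (μ + 1)⁻¹ =
     Real.exp 1 * ↑(Bell (M + 3)) * Real.log (μ + 1) := by
    field_simp
    ring
  rw [e7] at h
  linarith

noncomputable def Rr (n : ℕ) : ℝ := (Bell n : ℝ) / Bell (n-1)

lemma BellR_pos (n : ℕ) : (0:ℝ) < Bell n := by exact_mod_cast Bell_pos' n

lemma Rr_pos (n : ℕ) : 0 < Rr n := div_pos (BellR_pos _) (BellR_pos _)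

lemma Rr_succ (n : ℕ) : Rr (n+1) = (Bell (n+1) : ℝ) / Bell n := by simp [Rr]

lemma Bell_eq (n : ℕ) : (Bell (n+1) : ℝ) = Rr (n+1) * Bell n := by
  rw [Rr_succ]; have := (BellR_pos n).ne'; field_simp

lemma Rr_mono (n : ℕ) : Rr (n+1) ≤ Rr (n+2) := by
  rw [Rr_succ, Rr_succ, div_le_div_iff₀ (BellR_pos _) (BellR_pos _)]
  have := logconvex n
  nlinarith

lemma Rr_mono' (m n : ℕ) (h : m ≤ n) : Rr (m+1) ≤ Rr (n+1) := by
  induction n, h using Nat.le_induction with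
  | base => exact le_rfl
  | succ j hj ihj => exact ihj.trans (Rr_mono j)

lemma Rr_concave (n : ℕ) : Rr (n+2) * ((n:ℝ)+1) ≤ Rr (n+1) * ((n:ℝ)+2) := by
  have h := logconcave n
  unfold bb at h
  have e2 : ((n+2).factorial : ℝ) = ((n:ℝ)+2) * (((n:ℝ)+1) * n.factorial) := by
    rw [Nat.factorial_succ, Nat.factorial_succ]; push_cast; ring
  have e1 : ((n+1).factorial : ℝ) = (((n:ℝ)+1) * n.factorial) := by
    rw [Nat.factorial_succ]; push_cast; ring
  rw [e1, e2] at h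
  have hf : (0:ℝ) < n.factorial := by positivity
  have b0 := BellR_pos n
  have b1 : (Bell (n+1) : ℝ) = Rr (n+1) * Bell n := Bell_eq n
  have b2 : (Bell (n+2) : ℝ) = Rr (n+2) * Bell (n+1) := Bell_eq (n+1)
  rw [b2, b1] at h
  have r1 := Rr_pos (n+1)
  rw [div_mul_div_comm, div_pow, div_le_div_iff₀ (by positivity) (by positivity)] at h
  have hc : 0 < (Bell n : ℝ)^2 * Rr (n+1) * ((n:ℝ)+1) * (n.factorial:ℝ)^2 := by positivity
  refine le_of_mul_le_mul_left ?_ hc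
  nlinarith

lemma upper_exp (n : ℕ) : Rr (n+2) ≤ Real.exp (((n:ℝ)+1) / Rr (n+1)) := by
  -- N = n+1
  set y := ((n:ℝ)+1) / Rr (n+1) with hy
  have hyp : 0 < y := by have := Rr_pos (n+1); positivity
  have hy1 : bb n = y * bb (n+1) := by
    unfold bb
    rw [hy, Nat.factorial_succ, Bell_eq n]
    have := (Rr_pos (n+1)).ne'
    push_cast
    field_simp
  have hr : ∀ i, bb i / bb (i+1) ≤ bb (i+1) / bb (i+2) := by
    intro j
    rw [div_le_div_iff₀ (bb_pos _) (bb_pos _)]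
    nlinarith [logconcave j]
  have hm : Monotone (fun i => bb i / bb (i+1)) := monotone_nat_of_le_succ hr
  have hle : ∀ i, i ≤ n → bb i ≤ y * bb (i+1) := by
    intro i hi
    have h := hm hi
    simp only at h
    rw [hy1, mul_div_assoc, div_self (bb_pos _).ne', mul_one, div_le_iff₀ (bb_pos _)] at h
    exact h
  have hpow : ∀ j, j ≤ n + 1 → bb (n+1-j) ≤ y^j * bb (n+1) := by
    intro j
    induction j with
    | zero => intro _; simp
    | succ j ih =>
      intro hj
      have h1 := ih (by omega)
      have h2 := hle (n+1-(j+1)) (by omega)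
      have e : n+1-(j+1)+1 = n+1-j := by omega
      rw [e] at h2
      calc _ ≤ _ := h2
        _ ≤ y * (y^j * bb (n+1)) := by gcongr
        _ = _ := by ring
  have hrec := bb_rec (n+1)
  have hs : ∑ i ∈ Finset.range (n+1+1), bb (n+1-i) / (i.factorial : ℝ) ≤
      (∑ i ∈ Finset.range (n+1+1), y^i / (i.factorial : ℝ)) * bb (n+1) := by
    rw [Finset.sum_mul]
    apply Finset.sum_le_sum
    intro i hi
    have := hpow i (by have := Finset.mem_range.mp hi; omega)
    rw [div_mul_eq_mul_div]
    gcongr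
  have he := Real.sum_le_exp_of_nonneg hyp.le (n+1+1)
  have hR : Rr (n+2) * bb (n+1) = (((n+1:ℕ):ℝ)+1) * bb (n+1+1) := by
    unfold bb
    rw [Nat.factorial_succ (n+1), Bell_eq (n+1)]
    push_cast
    field_simp
  have hp := bb_pos (n+1)
  refine le_of_mul_le_mul_right ?_ hp
  rw [hR, hrec]
  exact hs.trans (by gcongr)

lemma key_R (M : ℕ) (R N : ℝ) (hR : R = Rr (M+3)) (hN : N = (M:ℝ)+3) :
    N / R ≤ Real.log (1 + R*(1+1/N)) + N^2/(2*(N-1)*R^2) - 1/(2*R^2*(N+1)/N^2+4/3) := by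
  have hRp : 0 < R := hR ▸ Rr_pos _
  have hN3 : 3 ≤ N := by rw [hN]; have := (Nat.cast_nonneg M : (0:ℝ) ≤ M); linarith
  set μ := Rr (M+4) with hμ
  have hμp : 0 < μ := Rr_pos _
  set Q := Rr (M+2) with hQ
  have hQp : 0 < Q := Rr_pos _
  have c1 : μ * N ≤ R * (N+1) := by
    have := Rr_concave (M+2)
    push_cast at this
    rw [hR, hN, hμ]
    have e : (M:ℝ)+2+1 = M+3 := by ring
    have e' : (M:ℝ)+2+2 = M+3+1 := by ring
    rw [e, e'] at this
    exact this
  have c2 : R * (N-1) ≤ Q * N := by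
    have := Rr_concave (M+1)
    push_cast at this
    rw [hR, hN, hQ]
    have e : (M:ℝ)+1+1 = M+3-1 := by ring
    have e' : (M:ℝ)+1+2 = M+3 := by ring
    rw [e, e'] at this
    exact this
  have c3 : Rr (M+5) * (N+1) ≤ μ * (N+2) := by
    have := Rr_concave (M+3)
    push_cast at this
    rw [hN, hμ]
    have e : (M:ℝ)+3+2 = M+3+2 := by ring
    exact this
  set l : ℝ := 1/(2*R^2*(N+1)/N^2+4/3) with hl
  have hlp : 0 < l := by positivity
  have h := key_sum M μ l (by rw [hμ, Rr_succ])
  have b1 := BellR_pos (M+1)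
  have b2 : (Bell (M+2) : ℝ) = Q * Bell (M+1) := Bell_eq (M+1)
  have b3 : (Bell (M+3) : ℝ) = R * Bell (M+2) := by rw [hR]; exact Bell_eq (M+2)
  have b4 : (Bell (M+4) : ℝ) = μ * Bell (M+3) := Bell_eq (M+3)
  have b5 : (Bell (M+5) : ℝ) = Rr (M+5) * Bell (M+4) := Bell_eq (M+4)
  have p3 := BellR_pos (M+3)
  have q1 : (Bell (M+1) : ℝ) = Bell (M+3) * (1/(R*Q)) := by rw [b3, b2]; field_simp
  have q2 : (Bell (M+2) : ℝ) = Bell (M+3) * (1/R) := by rw [b3]; field_simp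
  rw [b5, b4, q1, q2, ← hN] at h
  have h' : 2*l - 4/3*l^2 - 2*l^2*(μ*(Rr (M+5) - μ)) ≤
      Real.log (μ+1) - N/R + N/(2*(R*Q)) := by
    refine le_of_mul_le_mul_left ?_ p3
    have e : N/2 * (↑(Bell (M + 3)) * (1 / (R * Q))) = Bell (M+3) * (N/(2*(R*Q))) := by
      field_simp
    have e' : N * (↑(Bell (M + 3)) * (1 / R)) = Bell (M+3) * (N/R) := by
      field_simp
    rw [e, e'] at h
    linarith
  have v1 : Rr (M+5) - μ ≤ μ/(N+1) := by
    rw [le_div_iff₀ (by positivity)]; linarith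
  have c1' : μ ≤ R*(N+1)/N := by rw [le_div_iff₀ (by positivity)]; exact c1
  have v2 : μ*(Rr (M+5) - μ) ≤ R^2*(N+1)/N^2 := by
    calc μ*(Rr (M+5) - μ) ≤ μ*(μ/(N+1)) := by gcongr
      _ ≤ (R*(N+1)/N) * ((R*(N+1)/N)/(N+1)) := by gcongr
      _ = _ := by field_simp
  have v3 : l ≤ 2*l - 4/3*l^2 - 2*l^2*(μ*(Rr (M+5) - μ)) := by
    have e : l * (2*R^2*(N+1)/N^2+4/3) = 1 := by rw [hl]; field_simp
    have e2 : l = l^2 * (2*R^2*(N+1)/N^2+4/3) := by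
      calc l = l * (l * (2*R^2*(N+1)/N^2+4/3)) := by rw [e, mul_one]
        _ = _ := by ring
    have := mul_le_mul_of_nonneg_left v2 (by positivity : 0 ≤ 2*l^2)
    have e3 : 2*l^2*(R^2*(N+1)/N^2) = l^2 * (2*R^2*(N+1)/N^2) := by ring
    nlinarith
  have g1 : Real.log (μ+1) ≤ Real.log (1 + R*(1+1/N)) := by
    apply Real.log_le_log (by positivity)
    have : R*(N+1)/N = R*(1+1/N) := by field_simp
    linarith
  have g2 : N/(2*(R*Q)) ≤ N^2/(2*(N-1)*R^2) := by
    have : 0 < N - 1 := by linarith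
    rw [div_le_div_iff₀ (by positivity) (by positivity)]
    have := mul_le_mul_of_nonneg_left c2 (by positivity : 0 ≤ 2*N*R)
    nlinarith
  linarith

def dotB (n : ℕ) : List ℕ → ℕ → ℕ → ℕ
  | [], _, _ => 0
  | b :: t, c, k => c * b + dotB n t (c * (n - k) / (k + 1)) (k + 1)

def bl : ℕ → List ℕ
  | 0 => [1]
  | n + 1 => dotB n (bl n) 1 0 :: bl n

def chk1 (n b a p : ℕ) : Bool :=
  Nat.ble (100 * n * ((7*n-8)*a)) (p * (7*n*b)) &&
  Nat.ble (27182818286^p * ((7*n-8)*a)^100) ((10^10)^p * (7*n*b)^100)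

def chk : ℕ → List ℕ → Bool
  | n+2, b :: a :: t => chk1 (n+2) b a (100 * (n+2) * ((7*(n+2)-8)*a) / (7*(n+2)*b) + 1)
      && chk (n+1) (a :: t)
  | _, _ => true

lemma chk_ok : (chk (148+2) (bl (148+2)) && Nat.ble (40 * (bl (148+2)).tail.head!) ((bl (148+2)).head!)) = true := by
  decide +kernel

lemma chk_ex : ∃ K : ℕ, K = 148 ∧
    (chk (K+2) (bl (K+2)) && Nat.ble (40 * (bl (K+2)).tail.head!) ((bl (K+2)).head!)) = true :=
  ⟨148, rfl, chk_ok⟩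

lemma dotB_spec (n : ℕ) (f : ℕ → ℕ) : ∀ j k, k + j = n + 1 →
    dotB n ((List.range' k j).map (fun i => f (n - i))) (n.choose k) k =
      ∑ i ∈ Finset.range j, n.choose (k+i) * f (n-(k+i)) := by
  intro j
  induction j with
  | zero => intro k _; simp [dotB]
  | succ j ih =>
    intro k hk
    rw [List.range'_succ, List.map_cons, dotB, Finset.sum_range_succ']
    have e : n.choose k * (n-k) / (k+1) = n.choose (k+1) := by
      rw [← Nat.choose_succ_right_eq]
      exact Nat.mul_div_cancel _ (Nat.succ_pos k)
    rw [e, ih (k+1) (by omega), add_comm]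
    congr 1
    apply Finset.sum_congr rfl
    intro i _
    have : k + 1 + i = k + (i+1) := by omega
    rw [this]

lemma bl_spec (n : ℕ) : bl n = (List.range' 0 (n+1)).map (fun i => Bell (n - i)) := by
  induction n with
  | zero => simp [bl, Bell_zero']
  | succ n ih =>
    have h := dotB_spec n Bell (n+1) 0 (by omega)
    rw [← ih] at h
    simp only [Nat.choose_zero_right, zero_add] at h
    rw [bl, h, List.range'_succ, List.map_cons]
    congr 1
    · rw [Nat.sub_zero, Bell_succ', ← Finset.sum_range_reflect]
      apply Finset.sum_congr rfl
      intro i hi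
      have hi : i ≤ n := by have := Finset.mem_range.mp hi; omega
      have e1 : n + 1 - 1 - i = n - i := by omega
      have e2 : n - (n - i) = i := by omega
      rw [e1, e2, Nat.choose_symm hi]
    · rw [ih, List.range'_eq_map_range, List.range'_eq_map_range, List.map_map, List.map_map]
      apply List.map_congr_left
      intro i _
      simp only [Function.comp]
      congr 1
      omega

lemma bl_succ (n : ℕ) : bl (n+1) = Bell (n+1) :: bl n := by
  have h := bl_spec (n+1)
  rw [List.range'_succ, List.map_cons] at h
  have h2 : bl (n+1) = dotB n (bl n) 1 0 :: bl n := rfl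
  rw [h2] at h ⊢
  have := (List.cons.inj h).1
  rw [this]
  simp

lemma chk_spec (k : ℕ) : ∀ n, chk (n+k) (bl (n+k)) = true → chk n (bl n) = true := by
  induction k with
  | zero => intro n h; exact h
  | succ k ih =>
    intro n h
    apply ih
    have e : n + (k+1) = (n+k)+1 := rfl
    rw [e] at h
    generalize n + k = m at h
    rcases m with _ | m
    · simp [chk]
    · rw [bl_succ, bl_succ, chk, Bool.and_eq_true] at h
      rw [bl_succ]
      exact h.2

lemma fin_lower (n : ℕ) (h2 : 2 ≤ n) (h : n ≤ 150) :
    ∃ p : ℕ, 100 * n * ((7*n-8)*Bell (n-1)) ≤ p * (7*n*Bell n) ∧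
     27182818286^p * ((7*n-8)*Bell (n-1))^100 ≤ (10^10)^p * (7*n*Bell n)^100 := by
  obtain ⟨K, hK, hc⟩ := chk_ex
  rw [Bool.and_eq_true] at hc
  obtain ⟨m, rfl⟩ : ∃ m, n = m + 2 := ⟨n-2, by omega⟩
  have h1 := chk_spec (K + 2 - (m+2)) (m+2) (by
    have e : m + 2 + (K + 2 - (m+2)) = K + 2 := by omega
    rw [e]; exact hc.1)
  rw [bl_succ, bl_succ, chk, Bool.and_eq_true, chk1, Bool.and_eq_true] at h1
  have k1 := Nat.le_of_ble_eq_true h1.1.1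
  have k2 := Nat.le_of_ble_eq_true h1.1.2
  have e : m + 2 - 1 = m + 1 := rfl
  rw [e]
  exact ⟨_, k1, k2⟩

lemma R150 : 40 ≤ Rr 150 := by
  obtain ⟨K, hK, hc⟩ := chk_ex
  rw [Bool.and_eq_true] at hc
  have h := Nat.le_of_ble_eq_true hc.2
  rw [bl_succ, List.tail_cons, bl_succ, List.head!_cons, List.head!_cons] at h
  have e : 150 = (K + 1) + 1 := by omega
  rw [e, Rr_succ, le_div_iff₀ (BellR_pos _)]
  exact_mod_cast h

lemma fin_lower' (n : ℕ) (h2 : 2 ≤ n) (h : n ≤ 150) :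
    (n:ℝ) ≤ Rr n / (1 - 8/(7*n)) * Real.log (Rr n / (1 - 8/(7*n))) := by
  obtain ⟨p, h1, h3⟩ := fin_lower n h2 h
  have hn : (2:ℝ) ≤ n := by exact_mod_cast h2
  have hcast : ((7*n-8 : ℕ):ℝ) = 7*n-8 := by
    rw [Nat.cast_sub (by omega)]; push_cast; ring
  have hb := BellR_pos n
  have ha := BellR_pos (n-1)
  have h8 : (0:ℝ) < 7*n-8 := by linarith
  obtain ⟨A, hA⟩ : ∃ A : ℝ, A = 7*n*Bell n := ⟨_, rfl⟩
  obtain ⟨D, hD⟩ : ∃ D : ℝ, D = (7*n-8)*Bell (n-1) := ⟨_, rfl⟩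
  have hAp : 0 < A := by rw [hA]; positivity
  have hDp : 0 < D := by rw [hD]; positivity
  have h1' : 100 * (n:ℝ) * D ≤ p * A := by
    have : ((100 * n * ((7*n-8)*Bell (n-1)) : ℕ):ℝ) ≤ ((p * (7*n*Bell n) : ℕ):ℝ) := by
      exact_mod_cast h1
    push_cast [hcast] at this
    rw [hA, hD]; linarith
  have h3' : (27182818286:ℝ)^p * D^100 ≤ (10^10)^p * A^100 := by
    have : ((27182818286^p * ((7*n-8)*Bell (n-1))^100 : ℕ):ℝ) ≤
      (((10^10)^p * (7*n*Bell n)^100 : ℕ):ℝ) := by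
      exact_mod_cast h3
    push_cast [hcast] at this
    have e10 : ((10:ℝ)^10) = 10000000000 := by norm_num
    rw [hA, hD, e10]; exact this
  have hM : Rr n / (1 - 8/(7*n)) = A / D := by
    rw [hA, hD]; unfold Rr
    have : (7*(n:ℝ)-8) ≠ 0 := h8.ne'
    have : (1 - 8/(7*(n:ℝ))) = (7*n-8)/(7*n) := by field_simp
    rw [this]
    field_simp
  rw [hM]
  have hexp : Real.exp p ≤ (A/D)^100 := by
    rw [div_pow, le_div_iff₀ (by positivity)]
    have he : Real.exp 1 ≤ 27182818286/10^10 := by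
      have := Real.exp_one_lt_d9
      norm_num at this ⊢
      linarith
    calc Real.exp p * D^100 = (Real.exp 1)^p * D^100 := by rw [← Real.exp_nat_mul, mul_one]
      _ ≤ (27182818286/10^10)^p * D^100 := by gcongr
      _ = 27182818286^p * D^100 / (10^10)^p := by rw [div_pow]; ring
      _ ≤ _ := by rw [div_le_iff₀ (by positivity)]; linarith
  have hl : (p:ℝ) ≤ 100 * Real.log (A/D) := by
    have := Real.log_le_log (Real.exp_pos _) hexp
    rw [Real.log_exp, Real.log_pow] at this
    exact_mod_cast this
  have : (n:ℝ) ≤ A/D * (p/100) := by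
    rw [div_mul_div_comm, le_div_iff₀ (by positivity)]
    linarith
  refine this.trans ?_
  have : (p:ℝ)/100 ≤ Real.log (A/D) := by linarith
  gcongr

lemma small_bound (N R : ℝ) (hN : 150 ≤ N) (hR : 40 ≤ R)
    (key : N / R ≤ Real.log (1 + R*(1+1/N)) + N^2/(2*(N-1)*R^2) - 1/(2*R^2*(N+1)/N^2+4/3)) :
    N^2/(2*(N-1)*R^2) - 1/(2*R^2*(N+1)/N^2+4/3) ≤ 1/7*(1/R+1/N) := by
  obtain ⟨y, hy⟩ : ∃ y, y = N / R := ⟨_, rfl⟩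
  have hyp : 0 < y := by rw [hy]; positivity
  have hNy : N = y * R := by rw [hy]; field_simp
  obtain ⟨q, hq⟩ : ∃ q, q = Real.sqrt R := ⟨_, rfl⟩
  have hqq : q^2 = R := by rw [hq]; exact Real.sq_sqrt (by linarith)
  have hq0 : 0 ≤ q := by rw [hq]; exact Real.sqrt_nonneg _
  have hq6 : 6.32 ≤ q := by
    by_contra hcon
    push Not at hcon
    nlinarith
  have hqp : 0 < q := by linarith
  have hlogR : Real.log R ≤ 0.271*q+2 := by
    rw [← hqq, Real.log_pow]
    have h := Real.log_le_sub_one_of_pos (x := q / Real.exp 2) (by positivity)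
    rw [Real.log_div (by positivity) (by positivity), Real.log_exp] at h
    have he : 7.389 ≤ Real.exp 2 := by
      have : Real.exp 2 = (Real.exp 1)^2 := by rw [← Real.exp_nat_mul]; norm_num
      rw [this]
      have := Real.exp_one_gt_d9
      nlinarith
    have : q / Real.exp 2 ≤ q / 7.389 := by gcongr
    have : q / 7.389 ≤ 0.1355 * q := by
      rw [div_le_iff₀ (by norm_num)]; nlinarith
    push_cast
    linarith
  have hlog : Real.log (1 + R*(1+1/N)) ≤ 0.271*q+2.0317 := by
    have e : 1 + R*(1+1/N) = R * (1 + 1/N + 1/R) := by field_simp; ring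
    rw [e, Real.log_mul (by positivity) (by positivity)]
    have h := Real.log_le_sub_one_of_pos (x := 1 + 1/N + 1/R) (by positivity)
    have h1 : 1/N ≤ 1/150 := by gcongr
    have h2 : 1/R ≤ 1/40 := by gcongr
    linarith
  have hN1 : 0 < N - 1 := by linarith
  have hfrac : N^2/(2*(N-1)*R^2) ≤ 0.0126*y := by
    rw [div_le_iff₀ (by positivity), hy]
    have : 0.0126 * (N/R) * (2*(N-1)*R^2) = 0.0252 * N * (N-1) * R := by field_simp; ring
    rw [this]
    nlinarith [mul_nonneg (mul_nonneg (by linarith : 0 ≤ N) hN1.le) (sub_nonneg.mpr hR)]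
  have hpos : 0 < 1/(2*R^2*(N+1)/N^2+4/3) := by positivity
  have hyb : y ≤ 0.2745*q + 2.058 := by
    rw [← hy] at key
    linarith
  have hmain : 7.001*(y^2+3)*y ≤ 3*R*(y+1) := by
    have t1 : y^2 ≤ (0.2745*q + 2.058)^2 := by gcongr
    have t2 : 7.001*(y^2+3) - 3*R ≤ 3 := by
      rw [← hqq]; nlinarith
    have t3 : y ≤ R := by nlinarith
    nlinarith
  have hdiff : N^2/(2*(N-1)*R^2) - 1/(2*R^2*(N+1)/N^2+4/3) ≤
      N^2*(3*R^2+N^2)/(3*(N^2-1)*R^4) := by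
    have hN2 : 0 < N^2 - 1 := by nlinarith
    have e : 1/(2*R^2*(N+1)/N^2+4/3) = 3*N^2/(6*R^2*(N+1)+4*N^2) := by field_simp; ring
    have e2 : N^2/(2*(N-1)*R^2) - 3*N^2/(6*R^2*(N+1)+4*N^2) =
      N^2*(12*R^2+4*N^2)/(2*(N-1)*R^2*(6*R^2*(N+1)+4*N^2)) := by
      have := hN1.ne'
      field_simp; ring
    have e3 : N^2*(3*R^2+N^2)/(3*(N^2-1)*R^4) =
      N^2*(12*R^2+4*N^2)/(2*(N-1)*R^2*(6*R^2*(N+1))) := by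
      have : N + 1 ≠ 0 := by positivity
      have : N^2-1 = (N-1)*(N+1) := by ring
      have := hN1.ne'
      rw [‹N^2-1 = (N-1)*(N+1)›]
      field_simp; ring
    rw [e, e2, e3]
    gcongr
    nlinarith [sq_nonneg N]
  refine hdiff.trans ?_
  have hN2 : 0 < N^2 - 1 := by nlinarith
  have hN3 : N^2 * 7 ≤ 7.001 * (N^2-1) := by nlinarith
  rw [div_le_iff₀ (by positivity)]
  have e : 1/7*(1/R+1/N) * (3*(N^2-1)*R^4) = 3/7*(N^2-1)*R^2*(R*(y+1)/y) := by
    rw [hNy]; field_simp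
  rw [e]
  have e2 : 7.001*(y^2+3) ≤ 3*(R*(y+1)/y) := by
    rw [mul_div_assoc', le_div_iff₀ hyp]; linarith
  have e3 : 3*R^2+N^2 = R^2*(y^2+3) := by rw [hNy]; ring
  rw [e3]
  have k1 := mul_le_mul_of_nonneg_right hN3 (by positivity : 0 ≤ R^2*(y^2+3))
  have k2 := mul_le_mul_of_nonneg_left e2 (by positivity : 0 ≤ (N^2-1)*R^2)
  nlinarith

lemma lower_real (N R : ℝ) (hN : 150 ≤ N) (hR : 40 ≤ R)
    (key : N / R ≤ Real.log (1 + R*(1+1/N)) + N^2/(2*(N-1)*R^2) - 1/(2*R^2*(N+1)/N^2+4/3)) :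
    N ≤ R / (1 - 8/(7*N)) * Real.log (R / (1 - 8/(7*N))) := by
  have hs := small_bound N R hN hR key
  by_contra hcon
  push Not at hcon
  have hu8 : 8/(7*N) ≤ 8/(7*150) := by gcongr
  have hu8' : 0 < 8/(7*N) := by positivity
  obtain ⟨u, hu⟩ : ∃ u, u = 1 - 8/(7*N) := ⟨_, rfl⟩
  have hup : 0 < u := by rw [hu]; linarith
  rw [← hu] at hcon
  have h1 : Real.log (R/u) < N*u/R := by
    rw [lt_div_iff₀ (by positivity)]
    have : Real.log (R/u) * R = R/u * Real.log (R/u) * u := by field_simp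
    rw [this]
    gcongr
  have e : 1 + R*(1+1/N) = R/u * (u*(1 + 1/N + 1/R)) := by field_simp; ring
  rw [e, Real.log_mul (by positivity) (by positivity)] at key
  have h := Real.log_le_sub_one_of_pos (x := u*(1 + 1/N + 1/R)) (by positivity)
  have e2 : N*u/R = N/R - 8/7*(1/R) := by rw [hu]; field_simp
  have e3 : u*(1 + 1/N + 1/R) ≤ 1 + 1/N + 1/R - 8/7*(1/N) := by
    have : 8/(7*N) = 8/7*(1/N) := by field_simp
    rw [hu, this]
    have p1 : 0 < 1/N := by positivity
    have p2 : 0 < 1/R := by positivity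
    nlinarith [mul_pos p1 p1, mul_pos p1 p2]
  linarith

lemma all_lower (n : ℕ) (h2 : 2 ≤ n) :
    (n:ℝ) ≤ Rr n / (1 - 8/(7*n)) * Real.log (Rr n / (1 - 8/(7*n))) := by
  rcases le_total n 150 with h | h
  · exact fin_lower' n h2 h
  · obtain ⟨M, rfl⟩ : ∃ M, n = M + 3 := ⟨n-3, by omega⟩
    apply lower_real
    · exact_mod_cast h
    · exact R150.trans (Rr_mono' 149 (M+2) (by omega))
    · exact key_R M _ _ rfl (by push_cast; ring)

lemma lambert_spec (x : ℝ) (hx : 0 ≤ x) : lambertW x * Real.exp (lambertW x) = x := by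
  unfold lambertW
  have : ∃ y : ℝ, (fun y : ℝ => y * Real.exp y) y = x := by
    have hc : ContinuousOn (fun y : ℝ => y * Real.exp y) (Set.Icc 0 x) := by fun_prop
    have := intermediate_value_Icc hx hc
    have hm : x ∈ Set.Icc ((fun y : ℝ => y * Real.exp y) 0) ((fun y : ℝ => y * Real.exp y) x) := by
      constructor
      · simpa using hx
      · have := Real.one_le_exp hx
        show x ≤ x * Real.exp x
        nlinarith
    obtain ⟨y, _, hy⟩ := this hm
    exact ⟨y, hy⟩
  exact Function.invFun_eq this

lemma mlog_le (a m : ℝ) (hm : 1 ≤ m) (h : a * Real.log a ≤ m * Real.log m) : a ≤ m := by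
  by_contra hcon
  push Not at hcon
  have h1 : Real.log m < Real.log a := Real.log_lt_log (by linarith) hcon
  have h2 : 0 ≤ Real.log m := Real.log_nonneg hm
  nlinarith

lemma le_mlog (a m : ℝ) (hm : 1 ≤ m) (ha : 0 < a) (h : m * Real.log m ≤ a * Real.log a) :
    m ≤ a := by
  by_contra hcon
  push Not at hcon
  have h1 : Real.log a < Real.log m := Real.log_lt_log ha hcon
  have h2 : 0 ≤ Real.log m := Real.log_nonneg hm
  nlinarith

theorem stmt_10 (n : ℕ) (hn : 1 ≤ n) :
    |(Bell n : ℝ) / (Bell (n - 1) : ℝ) - Real.exp (lambertW n)| ≤ 8 / 7 * (1 / lambertW n) := by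
  change |Rr n - _| ≤ _
  have hnp : (0:ℝ) < n := by exact_mod_cast hn
  have hs := lambert_spec n hnp.le
  obtain ⟨W, hW⟩ : ∃ W, W = lambertW n := ⟨_, rfl⟩
  rw [← hW] at hs ⊢
  have hWp : 0 < W := by
    by_contra hcon
    push Not at hcon
    nlinarith [Real.exp_pos W]
  obtain ⟨m, hm⟩ : ∃ m, m = Real.exp W := ⟨_, rfl⟩
  rw [← hm] at hs ⊢
  have hlm : Real.log m = W := by rw [hm, Real.log_exp]
  have hm1 : 1 ≤ m := by rw [hm]; exact Real.one_le_exp hWp.le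
  have hmm : m * Real.log m = n := by rw [hlm, mul_comm]; exact hs
  have hRp := Rr_pos n
  have hup : Rr n ≤ m := by
    apply mlog_le _ _ hm1
    rw [hmm]
    obtain ⟨k, rfl⟩ : ∃ k, n = k + 1 := ⟨n-1, by omega⟩
    have h := (Rr_mono k).trans (upper_exp k)
    have h2 := Real.log_le_log hRp h
    rw [Real.log_exp, le_div_iff₀ hRp] at h2
    push_cast
    linarith
  have hinv : 8 / 7 * (1/W) = m * (8/(7*n)) := by
    rw [← hs]; field_simp
  rw [hinv, abs_le]
  have hpos : 0 < m * (8/(7*(n:ℝ))) := by positivity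
  refine ⟨?_, by linarith⟩
  rcases Nat.lt_or_ge n 2 with h1 | h2
  · have : n = 1 := by omega
    subst this
    push_cast
    nlinarith
  · have h := all_lower n h2
    have hn2 : (2:ℝ) ≤ n := by exact_mod_cast h2
    have hu : 0 < 1 - 8/(7*(n:ℝ)) := by
      have : 8/(7*(n:ℝ)) ≤ 8/(7*2) := by gcongr
      linarith
    have h3 := le_mlog _ m hm1 (div_pos hRp hu) (by rw [hmm]; exact h)
    rw [le_div_iff₀ hu] at h3
    linarith
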